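/- arXiv:1602.06017 — 2 statements merged into one kernel-verified Lean document; each statement's English description precedes it below -/
import Mathlib

section
/- For every $n \geq 3$, the dihedral group $D_{2^n}$ of order $2^n$ satisfies $S(D_{2^n}) = 2^{n+1} + (n-3) \cdot 2^{n-2}$. -/
/-- For a finite group `G`, `phiG G` is the number of elements of `G` whose order
equals the exponent of `G` (a group-theoretic generalization of Euler's totient). -/
noncomputable def phiG (G : Type*) [Group G] : ℕ :=
  Nat.card {a : G // orderOf a = Monoid.exponent G}

/-- `SG G` is the sum of `phiG H` over all subgroups `H` of `G`. -/
noncomputable def SG (G : Type*) [Group G] : ℕ :=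
  ∑ᶠ H : Subgroup G, phiG H

/-!
A subgroup of `DihedralGroup N` consists of the rotations by a subgroup `A` of `ZMod N`, together
with either no reflection or the reflections indexed by one coset of `A`. In the first case it is
cyclic of order `|A|`, in the second it is a copy of `DihedralGroup |A|`, and there are `N / |A|`
cosets. Since `ZMod N` has exactly one subgroup of each order `d ∣ N`, and the totients of these
`d` sum to `N`, this gives `S(D_{2N}) = N + ∑_{d ∣ N} (N / d) φ(D_{2d})`, where `D_{2d}` is
`DihedralGroup d`. For `N` a power of two, `d = 1` and `d = 2` contribute `N` and `3N / 2`, and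
every larger `d` contributes `N / 2`, because there `φ(D_{2d})` counts the `d / 2` generators of
the rotation group.
-/

open DihedralGroup

section PhiG

variable {G : Type*} [Group G]

theorem phiG_congr {H : Type*} [Group H] (e : G ≃* H) : phiG G = phiG H :=
  Nat.card_congr <| e.toEquiv.subtypeEquiv fun a ↦ by
    rw [← Monoid.exponent_eq_of_mulEquiv e]
    exact Eq.congr_left (e.orderOf_eq a).symm

theorem phiG_of_isCyclic [Finite G] [IsCyclic G] : phiG G = (Nat.card G).totient := by
  classical
  have := Fintype.ofFinite G
  rw [phiG, IsCyclic.exponent_eq_card, Nat.card_eq_fintype_card, Nat.card_eq_fintype_card,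
    Fintype.card_subtype, IsCyclic.card_orderOf_eq_totient dvd_rfl]

theorem phiG_of_exponent_prime [Finite G] {p : ℕ} [Fact p.Prime] (hG : Monoid.exponent G = p) :
    phiG G = Nat.card G - 1 := by
  have orderOf_eq_iff (a : G) : orderOf a = Monoid.exponent G ↔ a ∈ ({1} : Set G)ᶜ := by
    rw [hG, orderOf_eq_prime_iff, ← hG, Set.mem_compl_singleton_iff]
    exact and_iff_right (Monoid.pow_exponent_eq_one a)
  rw [phiG, Nat.card_congr (Equiv.subtypeEquivRight orderOf_eq_iff), Nat.card_coe_set_eq,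
    Set.ncard_compl, Set.ncard_singleton]

end PhiG

section CyclicSubgroups

theorem exists_zmod_hom_injective_range_eq {G : Type*} [AddGroup G] (A : AddSubgroup G)
    [IsAddCyclic A] : ∃ f : ZMod (Nat.card A) →+ G, Function.Injective f ∧ f.range = A := by
  let e : ZMod (Nat.card A) ≃+ A := zmodAddCyclicAddEquiv inferInstance
  refine ⟨A.subtype.comp e.toAddMonoidHom, A.subtype_injective.comp e.injective, ?_⟩
  rw [AddMonoidHom.range_comp, AddMonoidHom.range_eq_top.2 e.surjective,
    ← AddMonoidHom.range_eq_map, A.range_subtype]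

variable {G : Type*} [AddCommGroup G] [IsAddCyclic G] [Finite G]

theorem addSubgroup_eq_ker_nsmul_card (A : AddSubgroup G) :
    A = (nsmulAddMonoidHom (Nat.card A) : G →+ G).ker := by
  apply AddSubgroup.eq_of_le_of_card_ge
  · intro a ha
    exact congrArg Subtype.val (card_nsmul_eq_zero' (x := (⟨a, ha⟩ : A)))
  · rw [IsAddCyclic.card_nsmulAddMonoidHom_ker]
    exact Nat.gcd_le_right _ Nat.card_pos

theorem sum_addSubgroup_card_eq_sum_divisors [Fintype (AddSubgroup G)] {M : Type*}
    [AddCommMonoid M] (f : ℕ → M) :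
    ∑ A : AddSubgroup G, f (Nat.card A) = ∑ d ∈ (Nat.card G).divisors, f d := by
  refine Finset.sum_nbij' (fun A ↦ Nat.card A) (fun d ↦ (nsmulAddMonoidHom d : G →+ G).ker)
    (fun A _ ↦ ?_) (fun _ _ ↦ Finset.mem_univ _) (fun A _ ↦ (addSubgroup_eq_ker_nsmul_card A).symm)
    (fun d hd ↦ ?_) (fun _ _ ↦ rfl)
  · exact Nat.mem_divisors.2 ⟨A.card_addSubgroup_dvd_card, Nat.card_pos.ne'⟩
  · rw [IsAddCyclic.card_nsmulAddMonoidHom_ker]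
    exact Nat.gcd_eq_right (Nat.dvd_of_mem_divisors hd)

end CyclicSubgroups

section DihedralSubgroups

variable {N : ℕ}

/-- The inclusion of the cyclic group of rotations into the dihedral group. -/
def rotationHom (N : ℕ) : Multiplicative (ZMod N) →* DihedralGroup N where
  toFun i := r i.toAdd
  map_one' := rfl
  map_mul' _ _ := rfl

theorem rotationHom_injective : Function.Injective (rotationHom N) :=
  fun _ _ h ↦ r.inj h

theorem orderOf_r_eq_addOrderOf (i : ZMod N) : orderOf (r i) = addOrderOf i :=
  (orderOf_injective (rotationHom N) rotationHom_injective (.ofAdd i)).trans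
    (orderOf_ofAdd_eq_addOrderOf i)

/-- The additive subgroup of `ZMod N` formed by the angles of the rotations in `H`. -/
def rotationAngles (H : Subgroup (DihedralGroup N)) : AddSubgroup (ZMod N) :=
  (H.comap (rotationHom N)).toAddSubgroup'

theorem mem_rotationAngles {H : Subgroup (DihedralGroup N)} {i : ZMod N} :
    i ∈ rotationAngles H ↔ r i ∈ H :=
  Iff.rfl

/-- The subgroup of `DihedralGroup N` formed by the rotations `r i` with `i ∈ A` and the
reflections `sr j` with `j` in the coset `o` of `A`; there are no reflections if `o = none`. -/
def dihedralSubgroup (A : AddSubgroup (ZMod N)) (o : Option (ZMod N ⧸ A)) :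
    Subgroup (DihedralGroup N) where
  carrier := {x | match x with
    | r i => i ∈ A
    | sr j => (j : ZMod N ⧸ A) ∈ o}
  one_mem' := A.zero_mem
  mul_mem' := by
    rintro (i | i) (j | j) hi hj
    · exact A.add_mem hi hj
    · have same_coset : ((j - i : ZMod N) : ZMod N ⧸ A) = j :=
        QuotientAddGroup.eq.2 (by simpa using hi)
      change ((j - i : ZMod N) : ZMod N ⧸ A) ∈ o
      rwa [same_coset]
    · have same_coset : ((i + j : ZMod N) : ZMod N ⧸ A) = i :=
        QuotientAddGroup.eq.2 (by simpa using hj)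
      change ((i + j : ZMod N) : ZMod N ⧸ A) ∈ o
      rwa [same_coset]
    · change j - i ∈ A
      rw [sub_eq_neg_add]
      exact QuotientAddGroup.eq.1 (Option.mem_unique hi hj)
  inv_mem' := by
    rintro (i | i) hi
    · exact A.neg_mem hi
    · exact hi

theorem r_mem_dihedralSubgroup {A : AddSubgroup (ZMod N)} {o : Option (ZMod N ⧸ A)} {i : ZMod N} :
    r i ∈ dihedralSubgroup A o ↔ i ∈ A :=
  Iff.rfl

theorem sr_mem_dihedralSubgroup {A : AddSubgroup (ZMod N)} {o : Option (ZMod N ⧸ A)} {j : ZMod N} :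
    sr j ∈ dihedralSubgroup A o ↔ (j : ZMod N ⧸ A) ∈ o :=
  Iff.rfl

theorem rotationAngles_dihedralSubgroup (A : AddSubgroup (ZMod N)) (o : Option (ZMod N ⧸ A)) :
    rotationAngles (dihedralSubgroup A o) = A :=
  rfl

theorem dihedralSubgroup_right_injective (A : AddSubgroup (ZMod N)) :
    Function.Injective (dihedralSubgroup A) := by
  intro o o' h
  ext c
  obtain ⟨j, rfl⟩ := QuotientAddGroup.mk_surjective c
  exact SetLike.ext_iff.1 h (sr j)

theorem exists_sr_mem_iff (H : Subgroup (DihedralGroup N)) :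
    ∃ o : Option (ZMod N ⧸ rotationAngles H), ∀ j : ZMod N,
      sr j ∈ H ↔ (j : ZMod N ⧸ rotationAngles H) ∈ o := by
  by_cases hH : ∃ j, sr j ∈ H
  · obtain ⟨j₀, hj₀⟩ := hH
    refine ⟨some j₀, fun j ↦ ?_⟩
    rw [Option.mem_some_iff, QuotientAddGroup.eq, mem_rotationAngles, ← sub_eq_neg_add,
      ← sr_mul_sr, H.mul_mem_cancel_left hj₀]
  · exact ⟨none, fun j ↦ by simpa using not_exists.1 hH j⟩

theorem dihedralSubgroup_bijective : Function.Bijective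
    fun p : Σ A : AddSubgroup (ZMod N), Option (ZMod N ⧸ A) ↦ dihedralSubgroup p.1 p.2 := by
  constructor
  · rintro ⟨A, o⟩ ⟨B, o'⟩ h
    obtain rfl : A = B := by
      simpa only [rotationAngles_dihedralSubgroup] using congrArg rotationAngles h
    exact congrArg (Sigma.mk A) (dihedralSubgroup_right_injective A h)
  · intro H
    obtain ⟨o, ho⟩ := exists_sr_mem_iff H
    refine ⟨⟨rotationAngles H, o⟩, ?_⟩
    ext (i | j)
    · exact mem_rotationAngles
    · exact (ho j).symm

theorem dihedralSubgroup_none_eq_map (A : AddSubgroup (ZMod N)) :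
    dihedralSubgroup A none = A.toSubgroup.map (rotationHom N) := by
  ext (i | j)
  · exact (Subgroup.mem_map_iff_mem (K := A.toSubgroup) (x := .ofAdd i)
      (rotationHom_injective (N := N))).symm
  · simp [sr_mem_dihedralSubgroup, rotationHom]

/-- The homomorphism of dihedral groups induced by a homomorphism `f` of the groups of angles,
sending the reflection `sr 0` to `sr c`. -/
def dihedralMap {d : ℕ} (f : ZMod d →+ ZMod N) (c : ZMod N) :
    DihedralGroup d →* DihedralGroup N where
  toFun
    | r i => r (f i)
    | sr j => sr (c + f j)
  map_one' := congrArg r f.map_zero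
  map_mul' := by
    rintro (i | i) (j | j) <;> simp [← add_assoc, ← add_sub_assoc]

theorem dihedralMap_injective {d : ℕ} {f : ZMod d →+ ZMod N} (hf : Function.Injective f)
    (c : ZMod N) : Function.Injective (dihedralMap f c) := by
  rintro (i | i) (j | j) h
  · exact congrArg r (hf (r.inj h))
  · cases h
  · cases h
  · exact congrArg sr (hf (add_left_cancel (sr.inj h)))

theorem range_dihedralMap {d : ℕ} (f : ZMod d →+ ZMod N) (c : ZMod N) :
    (dihedralMap f c).range = dihedralSubgroup f.range (some c) := by
  ext (i | j)
  · rw [r_mem_dihedralSubgroup]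
    constructor
    · rintro ⟨k | k, h⟩
      · exact ⟨k, r.inj h⟩
      · cases h
    · rintro ⟨k, rfl⟩
      exact ⟨r k, rfl⟩
  · rw [sr_mem_dihedralSubgroup, Option.mem_some_iff, QuotientAddGroup.eq]
    constructor
    · rintro ⟨k | k, h⟩
      · cases h
      · exact ⟨k, eq_neg_add_of_add_eq (sr.inj h)⟩
    · rintro ⟨k, hk⟩
      exact ⟨sr k, congrArg sr (by rw [hk, add_neg_cancel_left])⟩

theorem phiG_dihedralSubgroup_none [NeZero N] (A : AddSubgroup (ZMod N)) :
    phiG (dihedralSubgroup A none) = (Nat.card A).totient := by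
  rw [dihedralSubgroup_none_eq_map,
    ← phiG_congr (A.toSubgroup.equivMapOfInjective _ rotationHom_injective), phiG_of_isCyclic]
  rfl

theorem phiG_dihedralSubgroup_some (A : AddSubgroup (ZMod N)) (c : ZMod N ⧸ A) :
    phiG (dihedralSubgroup A (some c)) = phiG (DihedralGroup (Nat.card A)) := by
  obtain ⟨j, rfl⟩ := QuotientAddGroup.mk_surjective c
  obtain ⟨f, hf, hfA⟩ := exists_zmod_hom_injective_range_eq A
  -- The domain of `f` mentions `A`; it has to be freed before `A` is replaced by `f.range`.
  generalize Nat.card A = d at f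
  subst hfA
  rw [← range_dihedralMap]
  exact (phiG_congr (MonoidHom.ofInjective (dihedralMap_injective hf j))).symm

end DihedralSubgroups

theorem phiG_dihedralGroup_of_even {d : ℕ} (hd : Even d) (h2 : 2 < d) :
    phiG (DihedralGroup d) = d.totient := by
  have : NeZero d := ⟨by omega⟩
  have exponent_eq : Monoid.exponent (DihedralGroup d) = d := by
    rw [DihedralGroup.exponent]
    exact Nat.lcm_eq_left hd.two_dvd
  let rotation (i : {i : ZMod d // addOrderOf i = d}) :
      {a : DihedralGroup d // orderOf a = d} :=
    ⟨r i, (orderOf_r_eq_addOrderOf _).trans i.2⟩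
  have rotation_bijective : Function.Bijective rotation := by
    constructor
    · exact fun i j h ↦ Subtype.ext (r.inj (congrArg Subtype.val h))
    · rintro ⟨i | j, h⟩
      · exact ⟨⟨i, (orderOf_r_eq_addOrderOf i).symm.trans h⟩, rfl⟩
      · exact absurd ((orderOf_sr j).symm.trans h) h2.ne
  rw [phiG, exponent_eq, ← Nat.card_eq_of_bijective rotation rotation_bijective,
    Nat.card_eq_fintype_card, Fintype.card_subtype,
    IsAddCyclic.card_addOrderOf_eq_totient (by rw [ZMod.card])]

theorem phiG_dihedralGroup_of_dvd_two {d : ℕ} (hd : d ∣ 2) :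
    phiG (DihedralGroup d) = 2 * d - 1 := by
  have : NeZero d := ⟨ne_zero_of_dvd_ne_zero two_ne_zero hd⟩
  have exponent_eq : Monoid.exponent (DihedralGroup d) = 2 := by
    rw [DihedralGroup.exponent]
    exact Nat.lcm_eq_right hd
  rw [phiG_of_exponent_prime exponent_eq, DihedralGroup.nat_card]

theorem SG_dihedralGroup (N : ℕ) [NeZero N] :
    SG (DihedralGroup N) = N + ∑ d ∈ N.divisors, N / d * phiG (DihedralGroup d) := by
  have := Fintype.ofFinite (AddSubgroup (ZMod N))
  have (A : AddSubgroup (ZMod N)) : Fintype (ZMod N ⧸ A) := Fintype.ofFinite _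
  have sum_over_cosets (A : AddSubgroup (ZMod N)) :
      ∑ o : Option (ZMod N ⧸ A), phiG (dihedralSubgroup A o) =
        (Nat.card A).totient + N / Nat.card A * phiG (DihedralGroup (Nat.card A)) := by
    have card_quotient : Fintype.card (ZMod N ⧸ A) = N / Nat.card A := by
      have lagrange := A.card_eq_card_quotient_mul_card_addSubgroup
      rw [Nat.card_zmod, Nat.card_eq_fintype_card] at lagrange
      exact (Nat.div_eq_of_eq_mul_left Nat.card_pos lagrange).symm
    simp only [Fintype.sum_option, phiG_dihedralSubgroup_none, phiG_dihedralSubgroup_some,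
      Finset.sum_const, Finset.card_univ, smul_eq_mul, card_quotient]
  calc SG (DihedralGroup N)
      = ∑ A : AddSubgroup (ZMod N), ∑ o : Option (ZMod N ⧸ A), phiG (dihedralSubgroup A o) := by
        rw [SG, ← finsum_comp _ dihedralSubgroup_bijective, finsum_eq_sum_of_fintype,
          Fintype.sum_sigma]
    _ = ∑ d ∈ N.divisors, (d.totient + N / d * phiG (DihedralGroup d)) := by
        simp only [sum_over_cosets]
        rw [sum_addSubgroup_card_eq_sum_divisors
          (fun d ↦ d.totient + N / d * phiG (DihedralGroup d)), Nat.card_zmod]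
    _ = N + ∑ d ∈ N.divisors, N / d * phiG (DihedralGroup d) := by
        rw [Finset.sum_add_distrib, Nat.sum_totient]

theorem div_mul_phiG_dihedralGroup_two_pow {m k : ℕ} (hk : k < m) :
    2 ^ (m + 1) / 2 ^ (k + 2) * phiG (DihedralGroup (2 ^ (k + 2))) = 2 ^ m := by
  have totient_eq : Nat.totient (2 ^ (k + 2)) = 2 ^ (k + 1) := by
    simp [Nat.totient_prime_pow_succ Nat.prime_two]
  have two_lt : 2 < 2 ^ (k + 2) := lt_self_pow₀ one_lt_two (by omega)
  rw [phiG_dihedralGroup_of_even (even_two.pow_of_ne_zero (by omega)) two_lt, totient_eq,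
    Nat.pow_div (by omega) two_pos, ← pow_add]
  congr 1
  omega

theorem SG_dihedralGroup_two_pow_succ (m : ℕ) :
    SG (DihedralGroup (2 ^ (m + 1))) = 2 ^ (m + 2) + (m + 3) * 2 ^ m := by
  have phiG_one : phiG (DihedralGroup (2 ^ 0)) = 1 := phiG_dihedralGroup_of_dvd_two (one_dvd 2)
  have phiG_two : phiG (DihedralGroup (2 ^ 1)) = 3 := phiG_dihedralGroup_of_dvd_two dvd_rfl
  have sum_of_four_dvd : ∑ k ∈ Finset.range m,
      2 ^ (m + 1) / 2 ^ (k + 2) * phiG (DihedralGroup (2 ^ (k + 2))) = m * 2 ^ m := by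
    rw [Finset.sum_congr rfl fun k hk ↦
      div_mul_phiG_dihedralGroup_two_pow (Finset.mem_range.1 hk)]
    simp
  rw [SG_dihedralGroup, Nat.sum_divisors_prime_pow Nat.prime_two, Finset.sum_range_succ',
    Finset.sum_range_succ', sum_of_four_dvd, phiG_one, phiG_two, zero_add,
    Nat.pow_div (by omega) two_pos, Nat.pow_div (by omega) two_pos, Nat.add_sub_cancel,
    Nat.sub_zero]
  ring

theorem stmt_8 (n : ℕ) (hn : 3 ≤ n) :
    SG (DihedralGroup (2 ^ (n - 1))) = 2 ^ (n + 1) + (n - 3) * 2 ^ (n - 2) := by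
  obtain ⟨m, rfl⟩ := Nat.exists_eq_add_of_le' hn
  rw [show m + 3 - 1 = m + 1 + 1 from rfl, SG_dihedralGroup_two_pow_succ,
    show m + 3 - 2 = m + 1 from rfl, Nat.add_sub_cancel]
  ring
end

section
/- Let $G$ be a finite non-abelian group with a normal Hall subgroup $N$ that is cyclic of order $n$, and suppose $N$ has a complement $H$ in $G$ of prime order $p$ (so $|G| = np$ with $\gcd(n,p)=1$) such that the centralizer $C_N(H)$ is trivial. Let $n_p$ denote the number of complements of $N$ in $G$. Then $S(G) = n + n_p(p-1)$. -/
/-!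
The centralizer of a nontrivial `x ∈ N` contains the abelian group `N`, which has prime index, and
is not `G` because `x` does not centralize `H`; hence it equals `N`. So no `a ∉ N` commutes with a
nontrivial element of `N`, and it follows that the centralizer of `a` is a complement of `N`, the
only one containing `a`. The elements outside `N` are thus partitioned by the nontrivial parts of
the complements, and `G` has `n + n_p (p - 1)` elements.

Moreover every element has order dividing `|N|` or `|G : N|`. As these are coprime, a subgroup `K`
with an element of order `exp K` is contained in `N` or embeds in `G ⧸ N`, so it is cyclic and its
elements of order `exp K` are its generators. Each element of `G` generates exactly one subgroup,
whence `S(G) = |G|`.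
-/

section Exponent

variable {G : Type*} [Group G]

lemma orderOf_eq_exponent_iff_zpowers_eq_top [Finite G] [IsCyclic G] (a : G) :
    orderOf a = Monoid.exponent G ↔ Subgroup.zpowers a = ⊤ := by
  rw [IsCyclic.exponent_eq_card, ← Nat.card_zpowers, Subgroup.card_eq_iff_eq_top]

lemma phiG_eq_card_zpowers_eq {K : Subgroup G} [Finite K]
    (hK : ∀ a : K, orderOf a = Monoid.exponent K → IsCyclic K) :
    phiG K = Nat.card {a : G // Subgroup.zpowers a = K} := by
  have generates_iff (a : K) :
      orderOf a = Monoid.exponent K ↔ Subgroup.zpowers (a : G) = K := by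
    have zpowers_eq_top_iff : Subgroup.zpowers a = ⊤ ↔ Subgroup.zpowers (a : G) = K := by
      rw [← (Subgroup.map_injective K.subtype_injective).eq_iff, MonoidHom.map_zpowers,
        ← MonoidHom.range_eq_map, K.range_subtype, K.subtype_apply]
    refine ⟨fun h ↦ ?_, fun h ↦ ?_⟩
    · have := hK a h
      exact zpowers_eq_top_iff.1 ((orderOf_eq_exponent_iff_zpowers_eq_top a).1 h)
    · have : IsCyclic K := (Subgroup.isCyclic_iff_exists_zpowers_eq_top K).2 ⟨a, h⟩
      exact (orderOf_eq_exponent_iff_zpowers_eq_top a).2 (zpowers_eq_top_iff.2 h)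
  have mem_of_zpowers_eq {a : G} (h : Subgroup.zpowers a = K) : a ∈ K :=
    h.le (Subgroup.mem_zpowers a)
  exact Nat.card_congr ((Equiv.subtypeEquivRight generates_iff).trans
    (Equiv.subtypeSubtypeEquivSubtype (q := fun a : G ↦ Subgroup.zpowers a = K) mem_of_zpowers_eq))

theorem SG_eq_card [Finite G]
    (hG : ∀ (K : Subgroup G) (a : K), orderOf a = Monoid.exponent K → IsCyclic K) :
    SG G = Nat.card G := by
  have := Fintype.ofFinite (Subgroup G)
  calc SG G = ∑ K : Subgroup G, Nat.card {a : G // Subgroup.zpowers a = K} := by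
        rw [SG, finsum_eq_sum_of_fintype]
        exact Finset.sum_congr rfl fun K _ ↦ phiG_eq_card_zpowers_eq (hG K)
    _ = Nat.card G := by
        rw [← Nat.card_sigma, Nat.card_congr (Equiv.sigmaFiberEquiv Subgroup.zpowers)]

end Exponent

section NormalSubgroup

open scoped commutatorElement

variable {G : Type*} [Group G] {N K : Subgroup G}

lemma disjoint_of_coprime_card_exponent (h : (Nat.card N).Coprime (Monoid.exponent K)) :
    Disjoint N K := by
  refine Subgroup.disjoint_def.2 fun {x} hxN hxK ↦ orderOf_eq_one_iff.1 ?_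
  exact Nat.eq_one_of_dvd_coprimes h (N.orderOf_dvd_natCard hxN)
    (Subgroup.orderOf_mk x hxK ▸ Monoid.order_dvd_exponent _)

variable [N.Normal]

lemma le_of_coprime_exponent_index (h : (Monoid.exponent K).Coprime N.index) : K ≤ N := by
  intro x hx
  rw [← QuotientGroup.eq_one_iff, ← orderOf_eq_one_iff]
  have hxK : orderOf x ∣ Monoid.exponent K :=
    Subgroup.orderOf_mk x hx ▸ Monoid.order_dvd_exponent _
  exact Nat.eq_one_of_dvd_coprimes h ((orderOf_map_dvd (QuotientGroup.mk' N) x).trans hxK)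
    (orderOf_dvd_natCard _)

lemma isCyclic_of_disjoint [IsCyclic (G ⧸ N)] (h : Disjoint N K) : IsCyclic K := by
  refine isCyclic_of_injective ((QuotientGroup.mk' N).comp K.subtype) ?_
  refine (injective_iff_map_eq_one _).2 fun x hx ↦ Subtype.ext ?_
  exact Subgroup.disjoint_def.1 h ((QuotientGroup.eq_one_iff _).1 hx) x.2

lemma commutatorElement_mem_of_quotient_comm [IsMulCommutative (G ⧸ N)] (g h : G) :
    ⁅g, h⁆ ∈ N :=
  Subgroup.Normal.quotient_commutative_iff_commutator_le.1 inferInstance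
    (Subgroup.commutator_mem_commutator (Subgroup.mem_top g) (Subgroup.mem_top h))

end NormalSubgroup

/-- `N` is a CC-subgroup if it contains the centralizer of each of its nontrivial elements. In a
finite group the proper nontrivial normal CC-subgroups are the Frobenius kernels; the trivial
subgroup and the whole group are allowed here. -/
def IsCCSubgroup {G : Type*} [Group G] (N : Subgroup G) : Prop :=
  ∀ x ∈ N, x ≠ 1 → Subgroup.centralizer {x} ≤ N

section CCSubgroup

open scoped commutatorElement

variable {G : Type*} [Group G] {N K : Subgroup G}

lemma isCCSubgroup_of_prime_index [IsMulCommutative N] (hN : N.index.Prime)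
    (hcenter : N ⊓ Subgroup.center G = ⊥) : IsCCSubgroup N := by
  intro x hxN hx
  have le_centralizer : N ≤ Subgroup.centralizer {x} := fun y hy ↦
    Subgroup.mem_centralizer_singleton_iff.2 <| setLike_mul_comm hy hxN
  have index_ne_one : (Subgroup.centralizer {x}).index ≠ 1 := fun h ↦ hx <| by
    have hx_center : x ∈ Subgroup.center G := by
      simpa using Subgroup.centralizer_eq_top_iff_subset.1 (Subgroup.index_eq_one.1 h)
    exact Subgroup.mem_bot.1 (hcenter ▸ ⟨hxN, hx_center⟩)
  have isUnit_or := hN.isUnit_or_isUnit (Subgroup.relIndex_mul_index le_centralizer).symm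
  rw [Nat.isUnit_iff, Nat.isUnit_iff] at isUnit_or
  exact Subgroup.relIndex_eq_one.1 (isUnit_or.resolve_right index_ne_one)

namespace IsCCSubgroup

lemma fixedPointFree_conjNormal [N.Normal] (hN : IsCCSubgroup N) {a : G} (ha : a ∉ N) :
    MonoidHom.FixedPointFree (MulAut.conjNormal a : MulAut N) := by
  intro x hx
  have hax : a * x * a⁻¹ = x := by simpa using congrArg Subtype.val hx
  by_contra hx1
  refine ha (hN x x.2 (by simpa using hx1) ?_)
  exact Subgroup.mem_centralizer_singleton_iff.2 (mul_inv_eq_iff_eq_mul.1 hax)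

lemma disjoint_centralizer (hN : IsCCSubgroup N) {a : G} (ha : a ∉ N) :
    Disjoint N (Subgroup.centralizer {a}) := by
  refine Subgroup.disjoint_def.2 fun {x} hxN hxa ↦ ?_
  by_contra hx
  exact ha (hN x hxN hx (Subgroup.mem_centralizer_singleton_iff.2
    (Subgroup.mem_centralizer_singleton_iff.1 hxa).symm))

variable [N.Normal]

lemma isComplement'_centralizer [Finite N] [IsMulCommutative (G ⧸ N)] (hN : IsCCSubgroup N)
    {a : G} (ha : a ∉ N) : N.IsComplement' (Subgroup.centralizer {a}) := by
  refine Subgroup.isComplement'_of_disjoint_and_mul_eq_univ (hN.disjoint_centralizer ha)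
    (Set.eq_univ_of_forall fun g ↦ ?_)
  -- If `⁅u, a⁆ = ⁅g, a⁆` with `u ∈ N`, then `u⁻¹ * g` centralizes `a`.
  obtain ⟨u, hu⟩ := (hN.fixedPointFree_conjNormal ha).commutatorMap_surjective
    ⟨⁅g, a⁆, commutatorElement_mem_of_quotient_comm g a⟩
  have conj_eq : u * a * (u : G)⁻¹ = g * a * g⁻¹ := by
    have : u * (a * ((u : G)⁻¹ * a⁻¹)) = g * a * g⁻¹ * a⁻¹ := by
      simpa [div_eq_mul_inv, commutatorElement_def] using congrArg Subtype.val hu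
    simpa only [← mul_assoc, mul_left_inj] using this
  refine ⟨u, u.2, (u : G)⁻¹ * g, ?_, mul_inv_cancel_left _ _⟩
  refine Subgroup.mem_centralizer_singleton_iff.2 ?_
  calc (u : G)⁻¹ * g * a = (u : G)⁻¹ * (g * a * g⁻¹) * g := by group
    _ = a * ((u : G)⁻¹ * g) := by rw [← conj_eq]; group

lemma centralizer_eq_of_isComplement' [IsMulCommutative (G ⧸ N)] (hN : IsCCSubgroup N)
    (hK : N.IsComplement' K) {a : G} (haK : a ∈ K) (ha : a ∉ N) :
    Subgroup.centralizer {a} = K := by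
  have le_centralizer : K ≤ Subgroup.centralizer {a} := fun x hx ↦ by
    have commutator_mem : ⁅x, a⁆ ∈ K :=
      K.mul_mem (K.mul_mem (K.mul_mem hx haK) (K.inv_mem hx)) (K.inv_mem haK)
    refine Subgroup.mem_centralizer_singleton_iff.2 (commutatorElement_eq_one_iff_mul_comm.1 ?_)
    exact Subgroup.disjoint_def.1 hK.disjoint (commutatorElement_mem_of_quotient_comm x a)
      commutator_mem
  refine le_antisymm (fun c hc ↦ ?_) le_centralizer
  obtain ⟨⟨⟨x, hx⟩, ⟨k, hk⟩⟩, rfl : x * k = c⟩ := hK.2 c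
  have hxc : x ∈ Subgroup.centralizer {a} :=
    (Subgroup.mul_mem_cancel_right _ (le_centralizer hk)).1 hc
  rwa [Subgroup.disjoint_def.1 (hN.disjoint_centralizer ha) hx hxc, one_mul]

lemma notMem_and_centralizer_eq_iff [IsMulCommutative (G ⧸ N)] (hN : IsCCSubgroup N)
    (hK : N.IsComplement' K) (a : G) :
    a ∉ N ∧ Subgroup.centralizer {a} = K ↔ a ∈ K ∧ a ≠ 1 := by
  constructor
  · rintro ⟨haN, rfl⟩
    exact ⟨Subgroup.mem_centralizer_singleton_iff.2 rfl, ne_of_mem_of_not_mem N.one_mem haN |>.symm⟩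
  · rintro ⟨haK, ha⟩
    have haN : a ∉ N := fun haN ↦ ha (Subgroup.disjoint_def.1 hK.disjoint haN haK)
    exact ⟨haN, hN.centralizer_eq_of_isComplement' hK haK haN⟩

lemma card_notMem [Finite G] [IsMulCommutative (G ⧸ N)] (hN : IsCCSubgroup N) :
    Nat.card {a : G // a ∉ N} = Nat.card {K // N.IsComplement' K} * (N.index - 1) := by
  have := Fintype.ofFinite {K // N.IsComplement' K}
  let complement (a : {a : G // a ∉ N}) : {K // N.IsComplement' K} :=
    ⟨Subgroup.centralizer {a.1}, hN.isComplement'_centralizer a.2⟩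
  have card_fiber (K : {K // N.IsComplement' K}) :
      Nat.card {a // complement a = K} = N.index - 1 := by
    obtain ⟨K, hK⟩ := K
    calc Nat.card {a // complement a = ⟨K, hK⟩}
        = Nat.card {a : G // a ∉ N ∧ Subgroup.centralizer {a} = K} := by
          simp only [complement, Subtype.mk.injEq]
          exact Nat.card_congr (Equiv.subtypeSubtypeEquivSubtypeInter (· ∉ N)
            (fun a ↦ Subgroup.centralizer {a} = K))
      _ = ((K : Set G) \ {1}).ncard :=
          Nat.card_congr (Equiv.subtypeEquivRight (hN.notMem_and_centralizer_eq_iff hK))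
      _ = N.index - 1 := by
          rw [Set.ncard_sdiff_singleton_of_mem K.one_mem, hK.symm.index_eq_card,
            ← Nat.card_coe_set_eq, SetLike.coe_sort_coe]
  rw [← Nat.card_congr (Equiv.sigmaFiberEquiv complement), Nat.card_sigma]
  simp only [card_fiber, Finset.sum_const, Finset.card_univ, smul_eq_mul, Nat.card_eq_fintype_card]

lemma isCyclic_of_orderOf_eq_exponent [Finite N] [IsCyclic N] [IsCyclic (G ⧸ N)]
    (hN : IsCCSubgroup N) (hHall : (Nat.card N).Coprime N.index) {a : K}
    (ha : orderOf a = Monoid.exponent K) : IsCyclic K := by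
  rw [← Subgroup.orderOf_coe] at ha
  by_cases haN : (a : G) ∈ N
  · have exponent_dvd : Monoid.exponent K ∣ Nat.card N := ha ▸ N.orderOf_dvd_natCard haN
    have hKN : K ≤ N := le_of_coprime_exponent_index (hHall.coprime_dvd_left exponent_dvd)
    exact isCyclic_of_injective _ (Subgroup.inclusion_injective hKN)
  · have card_centralizer : N.index = Nat.card (Subgroup.centralizer {(a : G)}) :=
      (hN.isComplement'_centralizer haN).symm.index_eq_card
    have exponent_dvd : Monoid.exponent K ∣ N.index := by
      rw [← ha, card_centralizer]
      exact Subgroup.orderOf_dvd_natCard _ (Subgroup.mem_centralizer_singleton_iff.2 rfl)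
    exact isCyclic_of_disjoint
      (disjoint_of_coprime_card_exponent (hHall.coprime_dvd_right exponent_dvd))

end IsCCSubgroup

end CCSubgroup

theorem stmt_14_general (G : Type*) [Group G] [Finite G] (N : Subgroup G) [N.Normal] [IsCyclic N]
    [IsCyclic (G ⧸ N)] (hHall : (Nat.card N).Coprime N.index) (hN : IsCCSubgroup N) :
    SG G = Nat.card N + Nat.card {K : Subgroup G // N.IsComplement' K} * (N.index - 1) := by
  rw [SG_eq_card fun K a ha ↦ hN.isCyclic_of_orderOf_eq_exponent hHall ha, ← hN.card_notMem]
  exact (Set.ncard_add_ncard_compl (N : Set G)).symm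

theorem stmt_14 (G : Type*) [Group G] [Fintype G]
    (hna : ¬ ∀ a b : G, a * b = b * a)
    (N : Subgroup G) [N.Normal] (hNcyc : IsCyclic N)
    (n : ℕ) (hn : Nat.card N = n)
    (hHall : Nat.Coprime (Nat.card N) N.index)
    (p : ℕ) (hp : p.Prime)
    (H : Subgroup G) (hcomp : N.IsComplement' H) (hH : Nat.card H = p)
    (hcent : N ⊓ Subgroup.centralizer (H : Set G) = ⊥) :
    SG G = n + Nat.card {K : Subgroup G // N.IsComplement' K} * (p - 1) := by
  have index_eq : N.index = p := hcomp.symm.index_eq_card.trans hH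
  have : Fact p.Prime := ⟨hp⟩
  have : IsCyclic (G ⧸ N) := isCyclic_of_prime_card (p := p) index_eq
  have hcenter : N ⊓ Subgroup.center G = ⊥ :=
    le_bot_iff.1 <| hcent ▸ inf_le_inf_left N (Subgroup.center_le_centralizer _)
  have hN : IsCCSubgroup N := isCCSubgroup_of_prime_index (index_eq ▸ hp) hcenter
  rw [stmt_14_general G N hHall hN, hn, index_eq]
end
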